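/- Let c ∈ ℝ and b ≥ 0. Let k, N : ℕ → ℕ satisfy k(d) < d < N(d) for all large d, (N(d) - 2d)/√d → c, and k(d)/√d → b as d → ∞. Then Q_{d,k(d)}(N(d)) → Φ(-(c+b)/√2) / Φ(-c/√2) as d → ∞. -/

import Mathlib

open Filter Finset Real Topology

/-- `Q d k N = 2^k · (Σ_{i=0}^{d-k-1} C(N-k-1, i)) / (Σ_{i=0}^{d-1} C(N-1, i))`,
the normalized expected `k`-face number `E f_k(C_N)/C(N,k)` of the Cover–Efron cone. -/
noncomputable def Q (d k N : ℕ) : ℝ :=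
  2 ^ k * (∑ i ∈ Finset.range (d - k), ((N - k - 1).choose i : ℝ)) /
    (∑ i ∈ Finset.range d, ((N - 1).choose i : ℝ))

/-- The cumulative distribution function `Φ` of the standard normal distribution. -/
noncomputable def stdNormalCDF (x : ℝ) : ℝ :=
  (Real.sqrt (2 * Real.pi))⁻¹ * ∫ t in Set.Iic x, Real.exp (-t ^ 2 / 2)

open MeasureTheory ProbabilityTheory

/-- The characteristic function of an affine image of a binomial variable with parameter `1 / 2`. -/
lemma charFun_map_binomial_half (n : ℕ) (p : unitInterval) (hp : (p : ℝ) = 1 / 2) (z t : ℝ) :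
    charFun ((binomial n p).map (fun j : ℕ ↦ (√n)⁻¹ * (2 * j - n) - z)) t =
      Complex.exp (-(t * z * Complex.I)) * Complex.cos (((√n)⁻¹ * t : ℝ)) ^ n := by
  have hq : (1 : ℂ) - 1 / 2 = 1 / 2 := by norm_num
  rw [charFun_apply_real, integral_map .of_discrete (by fun_prop), integral_binomial,
    Complex.cos, add_div, add_pow, Finset.mul_sum]
  have hr : Finset.range (n + 1) = Finset.Iic n := by ext; simp
  rw [hr]
  refine Finset.sum_congr rfl fun j hj ↦ ?_
  have hj : j ≤ n := by simpa using hj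
  simp only [hp, Complex.real_smul]
  push_cast
  rw [hq, div_pow (Complex.exp _), div_pow (Complex.exp _), ← Complex.exp_nat_mul, ← Complex.exp_nat_mul]
  have key : Complex.exp (t * ((√n : ℂ)⁻¹ * (2 * j - n) - z) * Complex.I) =
      Complex.exp (-(t * z * Complex.I)) *
      (Complex.exp (j * ((√n : ℂ)⁻¹ * t * Complex.I)) *
        Complex.exp ((n - j : ℕ) * (-((√n : ℂ)⁻¹ * t) * Complex.I))) := by
    rw [← Complex.exp_add, ← Complex.exp_add]
    congr 1
    push_cast [hj]
    ring
  rw [key]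
  simp only [one_div, inv_pow]
  ring

lemma tendsto_cos_inv_sqrt_mul_pow (t : ℝ) :
    Tendsto (fun n : ℕ ↦ Complex.cos (((√n)⁻¹ * t : ℝ)) ^ n) atTop
      (𝓝 (Complex.exp (-t ^ 2 / 2))) := by
  let P : Measure Bool := (2⁻¹ : ENNReal) • (Measure.dirac true + Measure.dirac false)
  let X : Bool → ℝ := fun b ↦ if b then 1 else -1
  have hint {E : Type} [NormedAddCommGroup E] [NormedSpace ℝ E] [CompleteSpace E] (f : Bool → E) :
      ∫ b, f b ∂P = (2⁻¹ : ℝ) • (f true + f false) := by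
    rw [integral_smul_measure, integral_add_measure .of_finite .of_finite,
      integral_dirac, integral_dirac]
    simp
  have : IsProbabilityMeasure P := ⟨by
    simp [P, ENNReal.inv_two_add_inv_two]⟩
  have h := tendsto_charFun_inv_sqrt_mul_pow (P := P) (X := X) .of_discrete
    (by rw [hint]; simp [X]) (by rw [hint]; simp [X]; norm_num) t
  refine h.congr fun n ↦ ?_
  rw [charFun_apply_real, integral_map .of_discrete (by fun_prop), hint, Complex.cos]
  simp [X]
  ring_nf

lemma gaussianReal_Iio_zero (z : ℝ) :
    (gaussianReal (-z) 1).real (Set.Iio 0) = stdNormalCDF z := by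
  have hmap : (gaussianReal 0 1).map (· + -z) = gaussianReal (-z) 1 := by
    rw [gaussianReal_map_add_const, zero_add]
  rw [← hmap, map_measureReal_apply (by fun_prop) measurableSet_Iio]
  have hpre : (· + -z) ⁻¹' Set.Iio (0 : ℝ) = Set.Iio z := by ext; simp
  have : NullSingletonClass (gaussianReal 0 1) := nullSingletonClass_gaussianReal one_ne_zero
  rw [hpre, measureReal_congr Iio_ae_eq_Iic, measureReal_def,
    gaussianReal_apply_eq_integral _ one_ne_zero, ENNReal.toReal_ofReal, stdNormalCDF,
    ← integral_const_mul]
  · simp [gaussianPDFReal]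
  · exact integral_nonneg fun x ↦ gaussianPDFReal_nonneg _ _ _

lemma stdNormalCDF_pos (z : ℝ) : 0 < stdNormalCDF z := by
  rw [← gaussianReal_Iio_zero, measureReal_def, ENNReal.toReal_pos_iff]
  refine ⟨?_, measure_lt_top _ _⟩
  rw [pos_iff_ne_zero]
  intro h
  have := (gaussianReal_absolutelyContinuous' (-z) (one_ne_zero (α := NNReal))) h
  simp at this

lemma binomial_half_real_setOf_lt (n m : ℕ) (p : unitInterval) (hp : (p : ℝ) = 1 / 2) :
    (binomial n p).real {j | j < m} = (∑ i ∈ Finset.range m, (n.choose i : ℝ)) / 2 ^ n := by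
  have hs : {j | j < m} = (Finset.range m : Set ℕ) := by ext; simp
  rw [hs, ← sum_measureReal_singleton, Finset.sum_div]
  refine Finset.sum_congr rfl fun i _ ↦ ?_
  rw [binomial_real_singleton, hp]
  rcases le_or_gt i n with hi | hi
  · rw [show (1 : ℝ) - 1 / 2 = 1 / 2 by norm_num, mul_assoc, ← pow_add, Nat.add_sub_cancel' hi,
      one_div, inv_pow, div_eq_mul_inv]
  · simp [Nat.choose_eq_zero_of_lt hi]

/-- **De Moivre–Laplace theorem** for the fair binomial distribution, with a moving threshold. -/
lemma tendsto_sum_choose_div_two_pow {n m : ℕ → ℕ} {z : ℝ} (hn : Tendsto n atTop atTop)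
    (hz : Tendsto (fun d ↦ (2 * (m d : ℝ) - n d) / √(n d)) atTop (𝓝 z)) :
    Tendsto (fun d ↦ (∑ i ∈ Finset.range (m d), ((n d).choose i : ℝ)) / 2 ^ n d) atTop
      (𝓝 (stdNormalCDF z)) := by
  obtain ⟨p, hp⟩ : ∃ p : unitInterval, (p : ℝ) = 1 / 2 :=
    ⟨⟨1 / 2, by norm_num, by norm_num⟩, rfl⟩
  let f (d j : ℕ) : ℝ := (√(n d))⁻¹ * (2 * j - n d) - (2 * (m d : ℝ) - n d) / √(n d)
  let μ (d : ℕ) : ProbabilityMeasure ℝ :=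
    ⟨(binomial (n d) p).map (f d), Measure.isProbabilityMeasure_map .of_discrete⟩
  let ν : ProbabilityMeasure ℝ := ⟨gaussianReal (-z) 1, inferInstance⟩
  have hμ : Tendsto μ atTop (𝓝 ν) := by
    refine ProbabilityMeasure.tendsto_iff_tendsto_charFun.2 fun t ↦ ?_
    change Tendsto (fun d ↦ charFun ((binomial (n d) p).map (f d)) t) atTop
      (𝓝 (charFun (gaussianReal (-z) 1) t))
    simp only [f, charFun_map_binomial_half _ p hp, charFun_gaussianReal]
    have h1 : Tendsto (fun d ↦ Complex.exp
        (-(t * ((2 * (m d : ℝ) - n d) / √(n d) : ℝ) * Complex.I))) atTop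
        (𝓝 (Complex.exp (-(t * z * Complex.I)))) :=
      ((by fun_prop : Continuous fun x : ℝ ↦ Complex.exp (-(t * x * Complex.I))).tendsto z).comp hz
    convert h1.mul ((tendsto_cos_inv_sqrt_mul_pow t).comp hn) using 1
    · rfl
    rw [← Complex.exp_add]
    congr 2
    push_cast
    ring
  have : NullSingletonClass (gaussianReal (-z) 1) := nullSingletonClass_gaussianReal one_ne_zero
  have hlim := ProbabilityMeasure.tendsto_measure_of_null_frontier_of_tendsto' hμ
    (E := Set.Iio 0) (by rw [frontier_Iio]; exact measure_singleton (μ := gaussianReal (-z) 1) _)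
  have hlim' := (ENNReal.tendsto_toReal (measure_ne_top _ _)).comp hlim
  rw [← gaussianReal_Iio_zero]
  refine hlim'.congr' ?_
  filter_upwards [hn.eventually_gt_atTop 0] with d hd
  have hpos : (0 : ℝ) < √(n d) := by positivity
  have hpre : f d ⁻¹' Set.Iio 0 = {j | j < m d} := by
    ext j
    have hf : f d j = 2 * ((j : ℝ) - m d) / √(n d) := by
      simp only [f]; field_simp; ring
    rw [Set.mem_preimage, Set.mem_Iio, hf, div_lt_iff₀ hpos, Set.mem_ofPred_eq,
      ← Nat.cast_lt (α := ℝ)]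
    constructor <;> intro h <;> linarith
  change ((binomial (n d) p).map (f d)).real (Set.Iio 0) = _
  rw [map_measureReal_apply .of_discrete measurableSet_Iio, hpre,
    binomial_half_real_setOf_lt _ _ p hp]

lemma tendsto_sum_choose_sub_div_two_pow {c b : ℝ} {k N : ℕ → ℕ}
    (hkN : ∀ᶠ d in atTop, k d < d ∧ d < N d)
    (h1 : Tendsto (fun d : ℕ ↦ ((N d : ℝ) - 2 * d) / √d) atTop (𝓝 c))
    (h2 : Tendsto (fun d : ℕ ↦ (k d : ℝ) / √d) atTop (𝓝 b)) :
    Tendsto (fun d ↦ (∑ i ∈ Finset.range (d - k d), ((N d - k d - 1).choose i : ℝ)) /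
      2 ^ (N d - k d - 1)) atTop (𝓝 (stdNormalCDF (-(c + b) / √2))) := by
  have hsqrt : Tendsto (fun d : ℕ ↦ (√d)⁻¹) atTop (𝓝 0) :=
    tendsto_inv_atTop_zero.comp (Real.tendsto_sqrt_atTop.comp tendsto_natCast_atTop_atTop)
  have hcast : ∀ᶠ d in atTop, ((N d - k d - 1 : ℕ) : ℝ) = N d - k d - 1 := by
    filter_upwards [hkN] with d hd
    rw [Nat.cast_sub (by omega), Nat.cast_sub (by omega), Nat.cast_one]
  have hratio : Tendsto (fun d : ℕ ↦ ((N d - k d - 1 : ℕ) : ℝ) / d) atTop (𝓝 2) := by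
    have h := (((h1.sub h2).sub hsqrt).mul hsqrt).const_add 2
    rw [mul_zero, add_zero] at h
    refine h.congr' ?_
    filter_upwards [hcast, eventually_gt_atTop 0] with d hd hd0
    have hpos : (0 : ℝ) < √d := by positivity
    have hsq : (√d) ^ 2 = (d : ℝ) := Real.sq_sqrt (by positivity)
    rw [hd]
    calc _ = 2 + ((N d : ℝ) - 2 * d - k d - 1) / (√d) ^ 2 := by field_simp
      _ = _ := by rw [hsq]; field_simp; ring
  refine tendsto_sum_choose_div_two_pow ?_ ?_
  · rw [← tendsto_natCast_atTop_iff (R := ℝ)]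
    refine (hratio.pos_mul_atTop two_pos tendsto_natCast_atTop_atTop).congr' ?_
    filter_upwards [eventually_gt_atTop 0] with d hd
    field_simp
  · have h := (((h1.add h2).neg.add hsqrt).div (hratio.sqrt) (by positivity))
    rw [add_zero] at h
    refine h.congr' ?_
    filter_upwards [hcast, hkN, eventually_gt_atTop 0] with d hd hk hd0
    have hpos : (0 : ℝ) < √d := by positivity
    simp only [Pi.div_apply]
    rw [Real.sqrt_div (Nat.cast_nonneg _), Nat.cast_sub hk.1.le]
    rw [← div_div_div_cancel_right₀ hpos.ne' (2 * ((d : ℝ) - k d) - _)]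
    congr 1
    rw [hd]
    field_simp
    ring

theorem Q_limit_at_half_zero (c b : ℝ) (hb : 0 ≤ b) (k N : ℕ → ℕ)
    (hkN : ∀ᶠ d in atTop, k d < d ∧ d < N d)
    (h1 : Tendsto (fun d : ℕ => ((N d : ℝ) - 2 * d) / Real.sqrt d) atTop (𝓝 c))
    (h2 : Tendsto (fun d : ℕ => (k d : ℝ) / Real.sqrt d) atTop (𝓝 b)) :
    Tendsto (fun d : ℕ => Q d (k d) (N d)) atTop
      (𝓝 (stdNormalCDF (-(c + b) / Real.sqrt 2) / stdNormalCDF (-c / Real.sqrt 2))) := by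
  have hden := tendsto_sum_choose_sub_div_two_pow (k := fun _ ↦ 0) (b := 0)
    (hkN.mono fun d hd ↦ ⟨by omega, hd.2⟩) h1 (by simp)
  rw [add_zero] at hden
  refine ((tendsto_sum_choose_sub_div_two_pow hkN h1 h2).div hden
    (stdNormalCDF_pos _).ne').congr' ?_
  filter_upwards [hkN] with d hd
  have hpow : (2 : ℝ) ^ (N d - 1) = 2 ^ k d * 2 ^ (N d - k d - 1) := by
    rw [← pow_add]
    congr 1
    omega
  simp only [Pi.div_apply, Nat.sub_zero, Q, hpow]
  field_simp
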